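/- arXiv:0910.0521 — 2 statements merged into one kernel-verified Lean document; each statement's English description precedes it below -/
import Mathlib

section
/- Let d ≥ 1, let Ω' ⊆ ℝ^d, and let z > 0. Let 𝒯 : ℝ^d → ℝ be a function of class C³ such that 0 ≤ 𝒯(x) ≤ 𝒯_max for all x in the closed z-neighborhood of Ω', and such that all third-order directional derivatives of 𝒯 are bounded in absolute value by M₃ there. Set v(x) := 1 − e^{−𝒯(x)} and v_max := 1 − e^{−𝒯_max}. Let ṽ : ℝ^d → ℝ satisfy |ṽ(x) − v(x)| ≤ C h^α for all x in the closed z-neighborhood of Ω', where C, α, h > 0 and v_max + C h^α < 1, and set 𝒯̃(x) := −ln(1 − ṽ(x)). Then for every x ∈ Ω' and every i ∈ {1,…,d}, |(𝒯̃(x + z e_i) − 𝒯̃(x − z e_i))/(2z) − ∂𝒯/∂x_i(x)| ≤ (C h^α)/((1 − v_max − C h^α) z) + (M₃/6) z². In particular the maximum over i of this error is O(h^α/z) + O(z²) as h, z → 0. -/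
open Filter Metric


lemma aux_deriv {d : ℕ} (T : EuclideanSpace ℝ (Fin d) → ℝ) (hT : ContDiff ℝ 3 T)
    (x e : EuclideanSpace ℝ (Fin d)) (n : ℕ) (hn : n < 3) (t : ℝ) :
    HasDerivAt (fun t : ℝ => iteratedFDeriv ℝ n T (x + t • e) (fun _ => e))
      (iteratedFDeriv ℝ (n+1) T (x + t • e) (fun _ => e)) t := by
  have h1 : Differentiable ℝ (iteratedFDeriv ℝ n T) :=
    hT.differentiable_iteratedFDeriv (by exact_mod_cast hn)
  have h2 : HasDerivAt (fun t : ℝ => x + t • e) e t := by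
    simpa using ((hasDerivAt_id t).smul_const e).const_add x
  have h3 := (h1 (x + t • e)).hasFDerivAt.comp_hasDerivAt t h2
  have h4 := (ContinuousMultilinearMap.apply ℝ (fun _ : Fin n => EuclideanSpace ℝ (Fin d)) ℝ
    (fun _ => e)).hasFDerivAt.comp_hasDerivAt t h3
  rw [iteratedFDeriv_succ_apply_left]
  exact h4

lemma aux_bound (f f' B B' : ℝ → ℝ) (z : ℝ) (hf : ∀ t, HasDerivAt f (f' t) t)
    (hB : ∀ t, HasDerivAt B (B' t) t) (f0 : f 0 = 0) (B0 : B 0 = 0)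
    (h : ∀ t, 0 ≤ t → t ≤ z → |f' t| ≤ B' t) : ∀ t, 0 ≤ t → t ≤ z → |f t| ≤ B t := by
  intro t h0 h1
  exact image_norm_le_of_norm_deriv_right_le_deriv_boundary (f := f) (f' := f') (a := 0) (b := z)
    (fun t _ => (hf t).continuousAt.continuousWithinAt) (fun t _ => (hf t).hasDerivWithinAt)
    (by simp [f0, B0]) hB (fun t ht => h t ht.1 ht.2.le) ⟨h0, h1⟩

lemma aux_fd (g0 g1 g2 g3 : ℝ → ℝ) (z M : ℝ) (hz : 0 < z)
    (h0 : ∀ t, HasDerivAt g0 (g1 t) t) (h1 : ∀ t, HasDerivAt g1 (g2 t) t)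
    (h2 : ∀ t, HasDerivAt g2 (g3 t) t) (hM : ∀ t, |t| ≤ z → |g3 t| ≤ M) :
    |(g0 z - g0 (-z)) / (2 * z) - g1 0| ≤ M / 6 * z ^ 2 := by
  have neg : ∀ g g' : ℝ → ℝ, (∀ t, HasDerivAt g (g' t) t) → ∀ t,
      HasDerivAt (fun t => g (-t)) (-(g' (-t))) t := by
    intro g g' h t
    have := (h (-t)).comp t (hasDerivAt_neg t)
    simpa [Function.comp_def] using this
  have b2 := aux_bound (fun t => g2 t - g2 (-t)) (fun t => g3 t + g3 (-t))
    (fun t => 2 * M * t) (fun _ => 2 * M) z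
    (fun t => ((h2 t).sub (neg _ _ h2 t)).congr_deriv (by ring))
    (fun t => by simpa using (hasDerivAt_id t).const_mul (2 * M)) (by simp) (by simp)
    (fun t a b => by
      have e1 := hM t (by rw [abs_of_nonneg a]; exact b)
      have e2 := hM (-t) (by rw [abs_neg, abs_of_nonneg a]; exact b)
      have := abs_add_le (g3 t) (g3 (-t))
      linarith)
  have b1 := aux_bound (fun t => g1 t + g1 (-t) - 2 * g1 0) (fun t => g2 t - g2 (-t))
    (fun t => M * t ^ 2) (fun t => 2 * M * t) z
    (fun t => by
      simpa [sub_eq_add_neg] using ((h1 t).add (neg _ _ h1 t)).sub_const (2 * g1 0))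
    (fun t => by
      have := (hasDerivAt_pow 2 t).const_mul M
      exact this.congr_deriv (by push_cast; ring)) (by simp; ring) (by simp) b2
  have b0 := aux_bound (fun t => g0 t - g0 (-t) - t * (2 * g1 0))
    (fun t => g1 t + g1 (-t) - 2 * g1 0)
    (fun t => M / 3 * t ^ 3) (fun t => M * t ^ 2) z
    (fun t => by
      have := ((h0 t).sub (neg _ _ h0 t)).sub ((hasDerivAt_id t).mul_const (2 * g1 0))
      exact this.congr_deriv (by ring))
    (fun t => by
      have := (hasDerivAt_pow 3 t).const_mul (M / 3)
      exact this.congr_deriv (by push_cast; ring)) (by simp) (by simp) b1 z hz.le le_rfl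
  have : (g0 z - g0 (-z)) / (2 * z) - g1 0 = (g0 z - g0 (-z) - z * (2 * g1 0)) / (2 * z) := by
    field_simp
  rw [this, abs_div, abs_of_pos (by positivity : 0 < 2 * z), div_le_iff₀ (by positivity)]
  calc _ ≤ M / 3 * z ^ 3 := b0
    _ = _ := by ring

lemma aux_log (a b δ ε : ℝ) (hδ : 0 < δ) (ha : δ ≤ a) (hb : δ ≤ b) (h : |a - b| ≤ ε) :
    |Real.log a - Real.log b| ≤ ε / δ := by
  have key : ∀ a b : ℝ, δ ≤ a → δ ≤ b → |a - b| ≤ ε → Real.log a - Real.log b ≤ ε / δ := by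
    intro a b ha hb h
    have ha' := hδ.trans_le ha
    have hb' := hδ.trans_le hb
    rw [← Real.log_div ha'.ne' hb'.ne']
    calc _ ≤ a / b - 1 := Real.log_le_sub_one_of_pos (by positivity)
      _ = (a - b) / b := by field_simp
      _ ≤ ε / b := by gcongr; exact (le_abs_self _).trans h
      _ ≤ ε / δ := by
        have : 0 ≤ ε := (abs_nonneg _).trans h
        gcongr
  rw [abs_sub_le_iff]
  exact ⟨key a b ha hb h, key b a hb ha (by rwa [abs_sub_comm])⟩

/-- **Theorem 1 of the paper** (with explicit constants).
Convergence of the centered finite-difference gradient of the approximate value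
function `𝒯̃ = -log (1 - ṽ)` to the gradient of the true value function `𝒯`,
where `v = 1 - exp (-𝒯)` is the Kruzkov transform and `ṽ` approximates `v`
with error `C * h ^ α` on the closed `z`-neighborhood of `Ω'`. -/
theorem hjb_pmp_gradient_convergence
    (d : ℕ) (hd : 1 ≤ d) (Ω' : Set (EuclideanSpace ℝ (Fin d)))
    (z : ℝ) (hz : 0 < z)
    (T : EuclideanSpace ℝ (Fin d) → ℝ) (Tmax M₃ : ℝ)
    (hT : ContDiff ℝ 3 T)
    (hT0 : ∀ x ∈ Metric.cthickening z Ω', 0 ≤ T x)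
    (hTmax : ∀ x ∈ Metric.cthickening z Ω', T x ≤ Tmax)
    (hM₃ : ∀ x ∈ Metric.cthickening z Ω', ∀ u : EuclideanSpace ℝ (Fin d), ‖u‖ = 1 →
      |iteratedFDeriv ℝ 3 T x (fun _ => u)| ≤ M₃)
    (vtilde : EuclideanSpace ℝ (Fin d) → ℝ)
    (C α h : ℝ) (hC : 0 < C) (hα : 0 < α) (hh : 0 < h)
    (hv : ∀ x ∈ Metric.cthickening z Ω',
      |vtilde x - (1 - Real.exp (-T x))| ≤ C * h ^ α)
    (hsmall : (1 - Real.exp (-Tmax)) + C * h ^ α < 1) :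
    ∀ x ∈ Ω', ∀ i : Fin d,
      |((-Real.log (1 - vtilde (x + z • EuclideanSpace.single i 1))) -
          (-Real.log (1 - vtilde (x - z • EuclideanSpace.single i 1)))) / (2 * z) -
        fderiv ℝ T x (EuclideanSpace.single i 1)| ≤
      C * h ^ α / ((1 - (1 - Real.exp (-Tmax)) - C * h ^ α) * z) + M₃ / 6 * z ^ 2 := by
  intro x hx i
  set e : EuclideanSpace ℝ (Fin d) := EuclideanSpace.single i 1 with he
  have hne : ‖e‖ = 1 := by simp [he]
  have hmem : ∀ t : ℝ, |t| ≤ z → x + t • e ∈ Metric.cthickening z Ω' := by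
    intro t ht
    refine Metric.mem_cthickening_of_dist_le _ x z Ω' hx ?_
    simpa [dist_eq_norm, norm_smul, hne] using ht
  have fd := aux_fd _ _ _ _ z M₃ hz (aux_deriv T hT x e 0 (by norm_num))
    (aux_deriv T hT x e 1 (by norm_num)) (aux_deriv T hT x e 2 (by norm_num))
    (fun t ht => hM₃ _ (hmem t ht) e hne)
  have e1 : ∀ y, iteratedFDeriv ℝ (0 + 1) T y (fun _ => e) = fderiv ℝ T y e := fun y => by
    simp [iteratedFDeriv_one_apply]
  simp only [iteratedFDeriv_zero_apply, e1, zero_smul, add_zero,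
    neg_smul, ← sub_eq_add_neg] at fd
  set δ := 1 - (1 - Real.exp (-Tmax)) - C * h ^ α with hδ
  have hδ0 : 0 < δ := by linarith
  have hε : 0 < C * h ^ α := by positivity
  have lg : ∀ y ∈ Metric.cthickening z Ω',
      |-Real.log (1 - vtilde y) - T y| ≤ C * h ^ α / δ := by
    intro y hy
    have h1 := hv y hy
    have h2 : Real.exp (-Tmax) ≤ Real.exp (-T y) :=
      Real.exp_le_exp.2 (neg_le_neg (hTmax y hy))
    have h3 := abs_le.1 h1
    have := aux_log (1 - vtilde y) (Real.exp (-T y)) δ (C * h ^ α) hδ0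
      (by linarith) (by linarith) (by rw [abs_le]; constructor <;> linarith)
    rw [Real.log_exp] at this
    rw [← abs_neg]
    convert this using 2
    ring
  have l1 := lg _ (hmem z (abs_of_pos hz).le)
  have l2 := lg _ (hmem (-z) (by rw [abs_neg, abs_of_pos hz]))
  rw [neg_smul, ← sub_eq_add_neg] at l2
  generalize -Real.log (1 - vtilde (x + z • e)) = A at *
  generalize -Real.log (1 - vtilde (x - z • e)) = B at *
  have h5 : |(A - B - (T (x + z • e) - T (x - z • e))) / (2 * z)| ≤ C * h ^ α / (δ * z) := by
    rw [abs_div, abs_of_pos (by positivity : 0 < 2 * z), div_le_iff₀ (by positivity)]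
    have : C * h ^ α / (δ * z) * (2 * z) = C * h ^ α / δ + C * h ^ α / δ := by
      field_simp; ring
    rw [this]
    rw [abs_le] at *
    constructor <;> linarith [l1.1, l1.2, l2.1, l2.2]
  have h6 : (A - B) / (2 * z) - fderiv ℝ T x e =
      (A - B - (T (x + z • e) - T (x - z • e))) / (2 * z) +
      ((T (x + z • e) - T (x - z • e)) / (2 * z) - fderiv ℝ T x e) := by ring
  rw [h6]
  exact (abs_add_le _ _).trans (add_le_add h5 fd)
end

section
/- Let 𝒯 : ℝ^d → ℝ be of class C¹ on a neighborhood of a point x with ∇𝒯(x) ≠ 0. For each δ > 0 small enough that the closed ball B(x, δ) is contained in this neighborhood, choose any minimizer ζ*_δ of ζ ↦ 𝒯(x + δ ζ) over the closed unit ball B(0,1) of ℝ^d, and set ξ*_δ := ((𝒯(x + δ ζ*_δ) − 𝒯(x))/δ) ζ*_δ. Then ζ*_δ → −∇𝒯(x)/‖∇𝒯(x)‖ and ξ*_δ → ∇𝒯(x) as δ → 0⁺. -/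
open Filter Metric

/-- If `𝒯` is `C¹` on a neighborhood `U` of `x` with `∇𝒯(x) ≠ 0`, and for each
`δ > 0` small enough (so that `closedBall x δ ⊆ U`) the vector `ζ δ` is a
minimizer of `ζ ↦ 𝒯(x + δζ)` over the closed unit ball, then, as `δ → 0⁺`,
`ζ δ → -∇𝒯(x)/‖∇𝒯(x)‖` and
`ξ δ := ((𝒯(x + δ • ζ δ) - 𝒯 x)/δ) • ζ δ → ∇𝒯(x)`. -/
theorem maximal_decrease_direction_tendsto_gradient
    (d : ℕ) (T : EuclideanSpace ℝ (Fin d) → ℝ) (x : EuclideanSpace ℝ (Fin d))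
    (U : Set (EuclideanSpace ℝ (Fin d))) (hU : U ∈ nhds x)
    (hT : ContDiffOn ℝ 1 T U) (hgrad : gradient T x ≠ 0)
    (ζ : ℝ → EuclideanSpace ℝ (Fin d))
    (hζmem : ∀ δ : ℝ, 0 < δ → Metric.closedBall x δ ⊆ U →
      ζ δ ∈ Metric.closedBall (0 : EuclideanSpace ℝ (Fin d)) 1)
    (hζmin : ∀ δ : ℝ, 0 < δ → Metric.closedBall x δ ⊆ U →
      ∀ w ∈ Metric.closedBall (0 : EuclideanSpace ℝ (Fin d)) 1,
        T (x + δ • ζ δ) ≤ T (x + δ • w)) :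
    Filter.Tendsto ζ (nhdsWithin 0 (Set.Ioi 0))
      (nhds (-(‖gradient T x‖⁻¹ • gradient T x))) ∧
    Filter.Tendsto (fun δ : ℝ => ((T (x + δ • ζ δ) - T x) / δ) • ζ δ)
      (nhdsWithin 0 (Set.Ioi 0)) (nhds (gradient T x)) := by
  have hd : DifferentiableAt ℝ T x := (hT.contDiffAt hU).differentiableAt (by norm_num)
  have hg := hd.hasGradientAt.hasFDerivAt
  set g := gradient T x with hgdef
  have hn : 0 < ‖g‖ := norm_pos_iff.mpr hgrad
  set u := -(‖g‖⁻¹ • g) with hu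
  have hunorm : ‖u‖ = 1 := by
    rw [hu, norm_neg, norm_smul, norm_inv, norm_norm, inv_mul_cancel₀ hn.ne']
  have hgu : inner ℝ g u = -‖g‖ := by
    rw [hu, inner_neg_right, inner_smul_right, real_inner_self_eq_norm_sq]
    field_simp
  have hgsm : g = (-‖g‖) • u := by
    rw [hu, smul_neg, neg_smul, neg_neg, smul_smul, mul_inv_cancel₀ hn.ne', one_smul]
  have H : ∀ ε : ℝ, 0 < ε → ∀ᶠ δ : ℝ in nhdsWithin 0 (Set.Ioi 0),
      0 < δ ∧ Metric.closedBall x δ ⊆ U ∧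
      ∀ w : EuclideanSpace ℝ (Fin d), ‖w‖ ≤ 1 →
        |T (x + δ • w) - T x - δ * inner ℝ g w| ≤ ε * δ := by
    intro ε hε
    have h1 := (hasFDerivAt_iff_isLittleO_nhds_zero.mp hg).def hε
    obtain ⟨r, hr, hr'⟩ := Metric.eventually_nhds_iff.mp h1
    obtain ⟨s, hs, hs'⟩ := Metric.mem_nhds_iff.mp hU
    filter_upwards [Ioo_mem_nhdsGT (lt_min hr hs)] with δ hδ
    have hδ0 : 0 < δ := hδ.1
    refine ⟨hδ0, (Metric.closedBall_subset_ball (hδ.2.trans_le (min_le_right _ _))).trans hs', ?_⟩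
    intro w hw
    have hnw : ‖δ • w‖ ≤ δ := by
      rw [norm_smul, Real.norm_of_nonneg hδ0.le]
      nlinarith
    have h2 := @hr' (δ • w) (by
      rw [dist_zero_right]
      exact hnw.trans_lt (hδ.2.trans_le (min_le_left _ _)))
    rw [InnerProductSpace.toDual_apply_apply, inner_smul_right, Real.norm_eq_abs] at h2
    exact h2.trans (mul_le_mul_of_nonneg_left hnw hε.le)
  have hζ : Filter.Tendsto ζ (nhdsWithin 0 (Set.Ioi 0)) (nhds u) := by
    rw [Metric.tendsto_nhds]
    intro e he
    filter_upwards [H (e ^ 2 * ‖g‖ / 8) (by positivity)] with δ ⟨hδ, hB, hw⟩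
    have hz : ‖ζ δ‖ ≤ 1 := by simpa using hζmem δ hδ hB
    have hm := hζmin δ hδ hB u (by simp [hunorm])
    have a1 := (abs_le.mp (hw _ hz)).1
    have a2 := (abs_le.mp (hw _ hunorm.le)).2
    rw [hgu] at a2
    have a3 : inner ℝ g (ζ δ) ≤ -‖g‖ + 2 * (e ^ 2 * ‖g‖ / 8) := by
      refine le_of_mul_le_mul_left ?_ hδ
      linarith
    have a4 : inner ℝ g (ζ δ) = -‖g‖ * inner ℝ (ζ δ) u := by
      conv_lhs => rw [hgsm]
      rw [real_inner_smul_left, real_inner_comm]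
    have a5 : 1 - e ^ 2 / 4 ≤ inner ℝ (ζ δ) u := by
      refine le_of_mul_le_mul_left ?_ hn
      linarith
    have a6 := norm_sub_sq_real (ζ δ) u
    rw [hunorm] at a6
    rw [dist_eq_norm]
    refine lt_of_pow_lt_pow_left₀ 2 he.le ?_
    nlinarith [norm_nonneg (ζ δ), sq_nonneg e, pow_pos he 2]
  refine ⟨hζ, ?_⟩
  have hin : Filter.Tendsto (fun δ => inner ℝ g (ζ δ)) (nhdsWithin 0 (Set.Ioi 0))
      (nhds (-‖g‖)) := by
    rw [← hgu]
    exact tendsto_const_nhds.inner hζ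
  have hdiff : Filter.Tendsto (fun δ : ℝ => (T (x + δ • ζ δ) - T x) / δ - inner ℝ g (ζ δ))
      (nhdsWithin 0 (Set.Ioi 0)) (nhds 0) := by
    rw [Metric.tendsto_nhds]
    intro e he
    filter_upwards [H (e / 2) (by positivity)] with δ ⟨hδ, hB, hw⟩
    have hz : ‖ζ δ‖ ≤ 1 := by simpa using hζmem δ hδ hB
    have a1 := hw _ hz
    have a2 : (T (x + δ • ζ δ) - T x) / δ - inner ℝ g (ζ δ)
        = (T (x + δ • ζ δ) - T x - δ * inner ℝ g (ζ δ)) / δ := by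
      field_simp
    rw [dist_zero_right, Real.norm_eq_abs, a2, abs_div, abs_of_pos hδ, div_lt_iff₀ hδ]
    nlinarith
  have hq := (hdiff.add hin).smul hζ
  rw [zero_add, ← hgsm] at hq
  simpa only [sub_add_cancel] using hq
end
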